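/- arXiv:2509.12613 — 10 statements merged into one kernel-verified Lean document; each statement's English description precedes it below -/
import Mathlib

section
/- For every real number x ≥ 2, (x+1)^{3/2} − 2^{3/2} ≥ ((3/2)^{3/2} − 1) · x^{3/2}. -/
/-!
Put `c = (3/2)^{3/2}`, so that `c * 2^{3/2} = 3^{3/2}`. Convexity of `t ↦ t^{3/2}` makes the
increment over `[x, x + 1]` at least the one over `[2, 3]`, which is `(c - 1) * 2^{3/2}`. Hence
`(x + 1)^{3/2} - 2^{3/2} ≥ x^{3/2} - (2 - c) * 2^{3/2}`, and since `c ≤ 2` the last term may be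
replaced by `(2 - c) * x^{3/2}`.
-/

open scoped Convex

section ConvexOn

variable {𝕜 E β : Type*}

theorem smul_add_smul_add_swap_of_add_eq_one [Semiring 𝕜] [AddCommMonoid E] [Module 𝕜 E]
    {a b : 𝕜} (hab : a + b = 1) (x y : E) :
    (a • x + b • y) + (b • x + a • y) = x + y := by
  rw [add_add_add_comm, ← add_smul, ← add_smul, add_comm b a, hab, one_smul, one_smul]

theorem map_add_map_le_of_convexOn_of_mem_segment [Semiring 𝕜] [PartialOrder 𝕜]
    [AddCancelCommMonoid E] [Module 𝕜 E] [AddCommMonoid β] [PartialOrder β] [IsOrderedAddMonoid β]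
    [Module 𝕜 β] {s : Set E} {f : E → β} {x y u v : E} (hf : ConvexOn 𝕜 s f)
    (hx : x ∈ s) (hy : y ∈ s) (hu : u ∈ [x -[𝕜] y]) (huv : u + v = x + y) :
    f u + f v ≤ f x + f y := by
  obtain ⟨a, b, ha, hb, hab, rfl⟩ := hu
  have hv : v = b • x + a • y :=
    add_left_cancel (huv.trans (smul_add_smul_add_swap_of_add_eq_one hab x y).symm)
  calc f (a • x + b • y) + f v
      = f (a • x + b • y) + f (b • x + a • y) := by rw [hv]
    _ ≤ (a • f x + b • f y) + (b • f x + a • f y) :=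
        add_le_add (hf.2 hx hy ha hb hab) (hf.2 hx hy hb ha ((add_comm b a).trans hab))
    _ = f x + f y := smul_add_smul_add_swap_of_add_eq_one hab _ _

theorem map_add_sub_map_le_of_convexOn [Field 𝕜] [LinearOrder 𝕜] [IsStrictOrderedRing 𝕜]
    [AddCommGroup β] [PartialOrder β] [IsOrderedAddMonoid β] [Module 𝕜 β]
    {s : Set 𝕜} {f : 𝕜 → β} {x y h : 𝕜} (hf : ConvexOn 𝕜 s f)
    (hx : x ∈ s) (hyh : y + h ∈ s) (hxy : x ≤ y) (hh : 0 ≤ h) :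
    f (x + h) - f x ≤ f (y + h) - f y := by
  have hmem : y ∈ [x -[𝕜] y + h] := by
    rw [segment_eq_Icc (hxy.trans (le_add_of_nonneg_right hh))]
    exact ⟨hxy, le_add_of_nonneg_right hh⟩
  have hsum := map_add_map_le_of_convexOn_of_mem_segment hf hx hyh hmem
    (add_left_comm y x h)
  rwa [sub_le_sub_iff, add_comm, add_comm (f (y + h))]

end ConvexOn

theorem div_rpow_sub_one_mul_rpow_le {a x h p : ℝ} (ha : 0 < a) (hax : a ≤ x) (hh : 0 ≤ h)
    (hp : 1 ≤ p) (hratio : ((a + h) / a) ^ p ≤ 2) :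
    (((a + h) / a) ^ p - 1) * x ^ p ≤ (x + h) ^ p - a ^ p := by
  set c := ((a + h) / a) ^ p with hc
  have hscale : c * a ^ p = (a + h) ^ p := by
    rw [hc, ← Real.mul_rpow (by positivity) ha.le, div_mul_cancel₀ _ ha.ne']
  have hmono : a ^ p ≤ x ^ p := Real.rpow_le_rpow ha.le hax (by linarith)
  have hincr : (a + h) ^ p - a ^ p ≤ (x + h) ^ p - x ^ p :=
    map_add_sub_map_le_of_convexOn (convexOn_rpow hp) ha.le
      (add_nonneg (ha.le.trans hax) hh) hax hh
  calc (c - 1) * x ^ p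
      = x ^ p - (2 - c) * x ^ p := by ring
    _ ≤ x ^ p - (2 - c) * a ^ p :=
        sub_le_sub_left (mul_le_mul_of_nonneg_left hmono (sub_nonneg.2 hratio)) _
    _ = x ^ p + ((a + h) ^ p - a ^ p) - a ^ p := by rw [← hscale]; ring
    _ ≤ (x + h) ^ p - a ^ p := by linarith

theorem three_halves_rpow_three_halves_le_two : (3 / 2 : ℝ) ^ ((3 : ℝ) / 2) ≤ 2 := by
  have hsq : ((3 / 2 : ℝ) ^ ((3 : ℝ) / 2)) ^ 2 = 27 / 8 := by
    rw [← Real.rpow_mul_natCast (by norm_num)]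
    norm_num
  exact le_of_sq_le_sq (by rw [hsq]; norm_num) zero_le_two

/-- Relation (rel_lb2): for all real `x ≥ 2`,
`(x+1)^{3/2} − 2^{3/2} ≥ ((3/2)^{3/2} − 1) x^{3/2}`. -/
theorem stmt_3 (x : ℝ) (hx : 2 ≤ x) :
    ((3 / 2 : ℝ) ^ ((3 : ℝ) / 2) - 1) * x ^ ((3 : ℝ) / 2)
      ≤ (x + 1) ^ ((3 : ℝ) / 2) - (2 : ℝ) ^ ((3 : ℝ) / 2) := by
  have hratio : ((2 : ℝ) + 1) / 2 = 3 / 2 := by norm_num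
  have hle_two : (((2 : ℝ) + 1) / 2) ^ ((3 : ℝ) / 2) ≤ 2 := by
    rw [hratio]
    exact three_halves_rpow_three_halves_le_two
  simpa only [hratio] using
    div_rpow_sub_one_mul_rpow_le two_pos hx zero_le_one (by norm_num) hle_two
end

section
/- Let E be a real inner product space, Z ⊆ E a nonempty convex set, and h : E → ℝ. Let z ∈ Z, let d ∈ E with d ≠ 0 be a subgradient of h⁺ at z (i.e. h⁺(y) ≥ h⁺(z) + ⟨d, y − z⟩ for all y ∈ E), let β > 0, and let ẑ be a projection of z − β·(h⁺(z)/‖d‖²)·d onto Z (i.e. ẑ ∈ Z and ⟨z − β·(h⁺(z)/‖d‖²)·d − ẑ, y − ẑ⟩ ≤ 0 for all y ∈ Z). Then for every z̄ ∈ Z with h(z̄) ≤ 0, ‖ẑ − z̄‖² ≤ ‖z − z̄‖² − β(2−β)·(h⁺(z))²/‖d‖². -/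
/-!
A projection onto `C` does not increase distances to points of `C`, so the estimate only has to be
proved for the unprojected step `z - t • d`. Expanding the square and using the subgradient
inequality gives `‖z - t • d - y‖² ≤ ‖z - y‖² - 2t (f z - f y) + t² ‖d‖²`. Since `f y ≤ 0`, the
last two terms are at most `-2t f z + t² ‖d‖²`, whose minimizer is the Polyak step
`t = f z / ‖d‖²`; relaxing it by the factor `β` gives the decrease `β (2 - β) (f z)² / ‖d‖²`.
-/

section ProjectedSubgradient

open RealInnerProductSpace

variable {E : Type*} [SeminormedAddCommGroup E] [InnerProductSpace ℝ E]
  {f : E → ℝ} {C : Set E} {d p w y z : E} {t β : ℝ}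

/-- The vector `d` is a subgradient of `f` at `z`, with the dual of `E` represented by the inner
product. -/
def IsSubgradient (f : E → ℝ) (d z : E) : Prop :=
  ∀ y, f z + ⟪d, y - z⟫ ≤ f y

/-- The point `p` is a projection of `w` onto `C`, in the variational sense. For convex `C` this
says that `p` is a nearest point to `w` in `C`; in general it is stronger. -/
structure IsProjectionOnto (C : Set E) (w p : E) : Prop where
  mem : p ∈ C
  inner_nonpos : ∀ y ∈ C, ⟪w - p, y - p⟫ ≤ 0

theorem IsProjectionOnto.norm_sub_sq_add_norm_sub_sq_le (hp : IsProjectionOnto C w p)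
    (hy : y ∈ C) : ‖w - p‖ ^ 2 + ‖p - y‖ ^ 2 ≤ ‖w - y‖ ^ 2 := by
  have expansion : ‖w - y‖ ^ 2 = ‖w - p‖ ^ 2 - 2 * ⟪w - p, y - p⟫ + ‖p - y‖ ^ 2 := by
    rw [← sub_sub_sub_cancel_right w y p, norm_sub_sq_real, norm_sub_rev y p]
  linarith [hp.inner_nonpos y hy]

theorem IsProjectionOnto.norm_sub_sq_le (hp : IsProjectionOnto C w p) (hy : y ∈ C) :
    ‖p - y‖ ^ 2 ≤ ‖w - y‖ ^ 2 :=
  (le_add_of_nonneg_left (sq_nonneg _)).trans (hp.norm_sub_sq_add_norm_sub_sq_le hy)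

theorem IsSubgradient.sub_le_inner (hf : IsSubgradient f d z) (y : E) :
    f z - f y ≤ ⟪d, z - y⟫ := by
  rw [← neg_sub y z, inner_neg_right]
  linarith [hf y]

theorem IsSubgradient.norm_sub_smul_sub_sq_le (hf : IsSubgradient f d z) (ht : 0 ≤ t) (y : E) :
    ‖z - t • d - y‖ ^ 2 ≤ ‖z - y‖ ^ 2 - 2 * t * (f z - f y) + t ^ 2 * ‖d‖ ^ 2 :=
  calc
    ‖z - t • d - y‖ ^ 2 = ‖z - y - t • d‖ ^ 2 := by rw [sub_right_comm]
    _ = ‖z - y‖ ^ 2 - 2 * t * ⟪d, z - y⟫ + t ^ 2 * ‖d‖ ^ 2 := by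
      rw [norm_sub_sq_real, inner_smul_right, real_inner_comm, norm_smul, mul_pow,
        Real.norm_eq_abs, sq_abs, mul_assoc]
    _ ≤ ‖z - y‖ ^ 2 - 2 * t * (f z - f y) + t ^ 2 * ‖d‖ ^ 2 := by
      gcongr
      exact hf.sub_le_inner y

theorem IsSubgradient.norm_sub_polyak_step_sub_sq_le (hf : IsSubgradient f d z) (hd : ‖d‖ ≠ 0)
    (hβ : 0 ≤ β) (hz : 0 ≤ f z) (hy : f y ≤ 0) :
    ‖z - (β * (f z / ‖d‖ ^ 2)) • d - y‖ ^ 2 ≤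
      ‖z - y‖ ^ 2 - β * (2 - β) * f z ^ 2 / ‖d‖ ^ 2 := by
  set t := β * (f z / ‖d‖ ^ 2) with ht_def
  have ht : 0 ≤ t := by positivity
  calc
    ‖z - t • d - y‖ ^ 2 ≤ ‖z - y‖ ^ 2 - 2 * t * (f z - f y) + t ^ 2 * ‖d‖ ^ 2 :=
      hf.norm_sub_smul_sub_sq_le ht y
    _ ≤ ‖z - y‖ ^ 2 - 2 * t * f z + t ^ 2 * ‖d‖ ^ 2 := by
      gcongr
      linarith
    _ = ‖z - y‖ ^ 2 - β * (2 - β) * f z ^ 2 / ‖d‖ ^ 2 := by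
      rw [ht_def]
      field_simp
      ring

theorem stmt_4_general (hf : IsSubgradient f d z) (hd : ‖d‖ ≠ 0) (hβ : 0 ≤ β) (hz : 0 ≤ f z)
    (hp : IsProjectionOnto C (z - (β * (f z / ‖d‖ ^ 2)) • d) p) (hyC : y ∈ C) (hy : f y ≤ 0) :
    ‖p - y‖ ^ 2 ≤ ‖z - y‖ ^ 2 - β * (2 - β) * f z ^ 2 / ‖d‖ ^ 2 :=
  (hp.norm_sub_sq_le hyC).trans (hf.norm_sub_polyak_step_sub_sq_le hd hβ hz hy)

end ProjectedSubgradient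

open RealInnerProductSpace in
/-- Lemma `lemma:basiter` (one step feasibility update): if `d ≠ 0` is a subgradient of
`h⁺` at `z ∈ Z`, `β > 0`, and `ẑ` is the projection of `z − β (h⁺(z)/‖d‖²) d` onto `Z`,
then for any `z̄ ∈ Z` with `h(z̄) ≤ 0`,
`‖ẑ − z̄‖² ≤ ‖z − z̄‖² − β(2−β)(h⁺(z))²/‖d‖²`. -/
theorem stmt_4 {E : Type*} [NormedAddCommGroup E] [InnerProductSpace ℝ E]
    (Z : Set E) (hZne : Z.Nonempty) (hZconv : Convex ℝ Z)
    (h : E → ℝ) (z : E) (hz : z ∈ Z)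
    (d : E) (hd : d ≠ 0)
    (hsub : ∀ y : E, max (h z) 0 + ⟪d, y - z⟫ ≤ max (h y) 0)
    (β : ℝ) (hβ : 0 < β)
    (zhat : E) (hzhatZ : zhat ∈ Z)
    (hproj : ∀ y ∈ Z, ⟪z - (β * (max (h z) 0 / ‖d‖ ^ 2)) • d - zhat, y - zhat⟫ ≤ 0)
    (zbar : E) (hzbar : zbar ∈ Z) (hzbarneg : h zbar ≤ 0) :
    ‖zhat - zbar‖ ^ 2 ≤ ‖z - zbar‖ ^ 2 - β * (2 - β) * (max (h z) 0) ^ 2 / ‖d‖ ^ 2 :=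
  stmt_4_general (f := fun y ↦ max (h y) 0) hsub (norm_ne_zero_iff.mpr hd) hβ.le
    (le_max_right _ _) ⟨hzhatZ, hproj⟩ hzbar (max_le hzbarneg le_rfl)
end

section
/- Let E be a real inner product space, Y ⊆ E a nonempty convex set, S ⊆ Y a nonempty set, and g : E → ℝ with g(x) ≤ 0 for all x ∈ S. Let 0 < β < 2, let M_g > 0, let z ∈ Y, let d ≠ 0 be a subgradient of g⁺ at z with ‖d‖ ≤ M_g, and let ẑ be a projection of z − β·(g⁺(z)/‖d‖²)·d onto Y. Then dist(ẑ, S)² ≤ dist(z, S)² − (β(2−β)/M_g²)·(g⁺(z))². -/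
/-!
Since `g⁺` vanishes on `S`, the subgradient inequality there reads `r + ⟪d, y - z⟫ ≤ 0` with
`r = g⁺(z)`. A step of length `t = β r / ‖d‖²` against `d` therefore changes the squared distance
to every point of `S` by at most `-2 t r + t² ‖d‖² = -β (2 - β) r² / ‖d‖²`. Projecting does not
increase these distances, and a decrease that is uniform over `S` passes to the infimum.
-/

section InfDist

variable {X : Type*} [PseudoMetricSpace X] {s : Set X} {x y : X} {a c : ℝ}

theorem le_infDist_sq_iff (hs : s.Nonempty) :
    a ≤ Metric.infDist x s ^ 2 ↔ ∀ y ∈ s, a ≤ dist x y ^ 2 := by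
  simp only [← Real.sqrt_le_left Metric.infDist_nonneg, ← Real.sqrt_le_left dist_nonneg,
    Metric.le_infDist hs]

theorem infDist_sq_le_infDist_sq_sub (hs : s.Nonempty)
    (h : ∀ u ∈ s, dist y u ^ 2 ≤ dist x u ^ 2 - c) :
    Metric.infDist y s ^ 2 ≤ Metric.infDist x s ^ 2 - c := by
  rw [le_sub_iff_add_le, le_infDist_sq_iff hs]
  intro u hu
  rw [← le_sub_iff_add_le]
  exact ((le_infDist_sq_iff hs).mp le_rfl u hu).trans (h u hu)

end InfDist

section Step

open RealInnerProductSpace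

variable {E : Type*} [NormedAddCommGroup E] [InnerProductSpace ℝ E] {w p y z d : E} {r t β : ℝ}

theorem dist_le_dist_of_inner_sub_nonpos (h : ⟪w - p, y - p⟫ ≤ 0) : dist p y ≤ dist w y := by
  have expansion := norm_sub_sq_real (w - p) (y - p)
  rw [sub_sub_sub_cancel_right, ← dist_eq_norm, ← dist_eq_norm, ← dist_eq_norm] at expansion
  rw [dist_comm p y, ← sq_le_sq₀ dist_nonneg dist_nonneg]
  linarith [sq_nonneg (dist w p)]

theorem dist_sub_smul_sq_le (ht : 0 ≤ t) (hcut : r + ⟪d, y - z⟫ ≤ 0) :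
    dist (z - t • d) y ^ 2 ≤ dist z y ^ 2 - 2 * t * r + t ^ 2 * ‖d‖ ^ 2 := by
  have expansion :
      dist (z - t • d) y ^ 2 = dist z y ^ 2 + 2 * t * ⟪d, y - z⟫ + t ^ 2 * ‖d‖ ^ 2 := by
    rw [dist_comm, dist_comm z, dist_eq_norm, dist_eq_norm, sub_sub_eq_add_sub, add_sub_right_comm,
      norm_add_sq_real, real_inner_smul_right, real_inner_comm, norm_smul, mul_pow,
      Real.norm_eq_abs, sq_abs]
    ring
  have gain : t * ⟪d, y - z⟫ ≤ t * -r := by gcongr; linarith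
  linarith

theorem dist_sub_polyak_step_sq_le (hβ : 0 ≤ β) (hr : 0 ≤ r) (hd : d ≠ 0)
    (hcut : r + ⟪d, y - z⟫ ≤ 0) :
    dist (z - (β * (r / ‖d‖ ^ 2)) • d) y ^ 2
      ≤ dist z y ^ 2 - β * (2 - β) / ‖d‖ ^ 2 * r ^ 2 := by
  have hd_norm : ‖d‖ ≠ 0 := norm_ne_zero_iff.mpr hd
  refine (dist_sub_smul_sq_le (by positivity) hcut).trans_eq ?_
  field_simp
  ring

theorem stmt_5_general {S : Set E} (hS : S.Nonempty) {f : E → ℝ} (hfS : ∀ y ∈ S, f y ≤ 0)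
    {M : ℝ} (hβ0 : 0 ≤ β) (hβ2 : β ≤ 2) (hfz : 0 ≤ f z) (hd : d ≠ 0)
    (hsub : ∀ y ∈ S, f z + ⟪d, y - z⟫ ≤ f y) (hdM : ‖d‖ ≤ M)
    (hp : ∀ y ∈ S, ⟪z - (β * (f z / ‖d‖ ^ 2)) • d - p, y - p⟫ ≤ 0) :
    Metric.infDist p S ^ 2
      ≤ Metric.infDist z S ^ 2 - β * (2 - β) / M ^ 2 * f z ^ 2 := by
  have : 0 ≤ β * (2 - β) := mul_nonneg hβ0 (sub_nonneg.mpr hβ2)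
  refine infDist_sq_le_infDist_sq_sub hS fun y hy ↦ ?_
  calc
    dist p y ^ 2 ≤ dist (z - (β * (f z / ‖d‖ ^ 2)) • d) y ^ 2 := by
      gcongr
      exact dist_le_dist_of_inner_sub_nonpos (hp y hy)
    _ ≤ dist z y ^ 2 - β * (2 - β) / ‖d‖ ^ 2 * f z ^ 2 :=
      dist_sub_polyak_step_sq_le hβ0 hfz hd ((hsub y hy).trans (hfS y hy))
    _ ≤ dist z y ^ 2 - β * (2 - β) / M ^ 2 * f z ^ 2 := by gcongr

end Step

open RealInnerProductSpace in
/-- One step feasibility update in terms of distances to `S ⊆ Y`: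
`dist(ẑ, S)² ≤ dist(z, S)² − (β(2−β)/M_g²)(g⁺(z))²`. -/
theorem stmt_5 {E : Type*} [NormedAddCommGroup E] [InnerProductSpace ℝ E]
    (Y : Set E) (hYne : Y.Nonempty) (hYconv : Convex ℝ Y)
    (S : Set E) (hSY : S ⊆ Y) (hSne : S.Nonempty)
    (g : E → ℝ) (hg : ∀ x ∈ S, g x ≤ 0)
    (β Mg : ℝ) (hβ0 : 0 < β) (hβ2 : β < 2) (hMg : 0 < Mg)
    (z : E) (hz : z ∈ Y)
    (d : E) (hd : d ≠ 0)
    (hsub : ∀ y : E, max (g z) 0 + ⟪d, y - z⟫ ≤ max (g y) 0)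
    (hdnorm : ‖d‖ ≤ Mg)
    (zhat : E) (hzhatY : zhat ∈ Y)
    (hproj : ∀ y ∈ Y, ⟪z - (β * (max (g z) 0 / ‖d‖ ^ 2)) • d - zhat, y - zhat⟫ ≤ 0) :
    Metric.infDist zhat S ^ 2
      ≤ Metric.infDist z S ^ 2 - β * (2 - β) / Mg ^ 2 * (max (g z) 0) ^ 2 :=
  stmt_5_general (f := fun y ↦ max (g y) 0) hSne (fun y hy ↦ max_le (hg y hy) le_rfl)
    hβ0.le hβ2.le (le_max_right _ _) hd (fun y _ ↦ hsub y) hdnorm fun y hy ↦ hproj y (hSY hy)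
end

section
/- Let E be a real inner product space, Y ⊆ E a nonempty convex set, N ≥ 1 a natural number, and g_1, …, g_N : E → ℝ. Let 0 < β < 2 and M_g > 0. Let z^0, z^1, …, z^N ∈ Y be such that for each i = 1, …, N there is d_i ≠ 0, a subgradient of g_i⁺ at z^{i−1} with ‖d_i‖ ≤ M_g, and z^i is a projection of z^{i−1} − β·(g_i⁺(z^{i−1})/‖d_i‖²)·d_i onto Y. Then for every x ∈ Y satisfying g_i(x) ≤ 0 for all i = 1, …, N, one has ‖z^N − x‖² ≤ ‖z^0 − x‖² − (β(2−β)/M_g²) · Σ_{i=1}^N (g_i⁺(z^{i−1}))². -/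
/-!
Write `r = g_i⁺(z^{i-1})`. Since `g_i⁺(x) = 0`, the subgradient inequality at `x` is the cut
`r + ⟪d_i, x - z^{i-1}⟫ ≤ 0`. Expanding the square, a step of length `s` along `-d_i` thus changes
the squared distance to `x` by at most `-2sr + s²‖d_i‖²`, which at `s = βr/‖d_i‖²` equals
`-β(2-β)r²/‖d_i‖²`. Projecting only brings the point closer to `x`; bound `‖d_i‖` by `M_g` and
telescope.
-/

theorem le_sub_sum_Icc_of_forall_le_sub {α : Type*} [AddCommGroup α] [PartialOrder α]
    [IsOrderedAddMonoid α] {a c : ℕ → α} {N : ℕ}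
    (h : ∀ i ∈ Finset.Icc 1 N, a i ≤ a (i - 1) - c i) :
    a N ≤ a 0 - ∑ i ∈ Finset.Icc 1 N, c i := by
  induction N with
  | zero => simp
  | succ n ih =>
    have last_step : a (n + 1) ≤ a n - c (n + 1) := h (n + 1) (by simp)
    have first_steps : a n ≤ a 0 - ∑ i ∈ Finset.Icc 1 n, c i :=
      ih fun i hi => h i (Finset.Icc_subset_Icc_right n.le_succ hi)
    calc a (n + 1) ≤ a 0 - ∑ i ∈ Finset.Icc 1 n, c i - c (n + 1) :=
          last_step.trans (sub_le_sub_right first_steps _)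
      _ = a 0 - ∑ i ∈ Finset.Icc 1 (n + 1), c i := by
          rw [Finset.sum_Icc_succ_top (by lia), sub_sub]

section ProjectedSubgradientStep

open RealInnerProductSpace

variable {E : Type*} [SeminormedAddCommGroup E] [InnerProductSpace ℝ E]

theorem norm_sub_sq_le_of_inner_sub_sub_nonpos {w p x : E} (h : ⟪w - p, x - p⟫ ≤ 0) :
    ‖p - x‖ ^ 2 ≤ ‖w - x‖ ^ 2 := by
  have expansion : ‖w - x‖ ^ 2 = ‖w - p‖ ^ 2 - 2 * ⟪w - p, x - p⟫ + ‖p - x‖ ^ 2 := by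
    rw [norm_sub_rev p x, ← norm_sub_sq_real, sub_sub_sub_cancel_right]
  linarith [sq_nonneg ‖w - p‖]

theorem norm_sub_smul_sub_sq_le_of_add_inner_nonpos {a d x : E} {r s : ℝ} (hs : 0 ≤ s)
    (hcut : r + ⟪d, x - a⟫ ≤ 0) :
    ‖a - s • d - x‖ ^ 2 ≤ ‖a - x‖ ^ 2 - 2 * s * r + s ^ 2 * ‖d‖ ^ 2 :=
  calc ‖a - s • d - x‖ ^ 2 = ‖x - a + s • d‖ ^ 2 := by
        rw [← norm_neg]; congr 2; abel
    _ = ‖a - x‖ ^ 2 + 2 * s * ⟪d, x - a⟫ + s ^ 2 * ‖d‖ ^ 2 := by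
        rw [norm_add_sq_real, real_inner_smul_right, real_inner_comm, norm_smul, mul_pow,
          Real.norm_eq_abs, sq_abs, norm_sub_rev x a, mul_assoc]
    _ ≤ ‖a - x‖ ^ 2 + 2 * s * (-r) + s ^ 2 * ‖d‖ ^ 2 := by
        gcongr
        linarith
    _ = ‖a - x‖ ^ 2 - 2 * s * r + s ^ 2 * ‖d‖ ^ 2 := by ring

theorem norm_sub_polyak_step_sub_sq_le {a d x : E} {r β : ℝ} (hβ : 0 ≤ β) (hr : 0 ≤ r)
    (hcut : r + ⟪d, x - a⟫ ≤ 0) :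
    ‖a - (β * (r / ‖d‖ ^ 2)) • d - x‖ ^ 2 ≤ ‖a - x‖ ^ 2 - β * (2 - β) / ‖d‖ ^ 2 * r ^ 2 := by
  have hstep : 0 ≤ β * (r / ‖d‖ ^ 2) := by positivity
  refine (norm_sub_smul_sub_sq_le_of_add_inner_nonpos hstep hcut).trans_eq ?_
  rcases eq_or_ne ‖d‖ 0 with hd | hd
  · simp [hd]
  · field_simp
    ring

theorem norm_sub_sq_le_of_projected_polyak_step {a b d x : E} {r β M : ℝ}
    (hβ0 : 0 ≤ β) (hβ2 : β ≤ 2) (hr : 0 ≤ r) (hd : ‖d‖ ≠ 0) (hdM : ‖d‖ ≤ M)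
    (hcut : r + ⟪d, x - a⟫ ≤ 0)
    (hproj : ⟪a - (β * (r / ‖d‖ ^ 2)) • d - b, x - b⟫ ≤ 0) :
    ‖b - x‖ ^ 2 ≤ ‖a - x‖ ^ 2 - β * (2 - β) / M ^ 2 * r ^ 2 :=
  calc ‖b - x‖ ^ 2 ≤ ‖a - (β * (r / ‖d‖ ^ 2)) • d - x‖ ^ 2 :=
        norm_sub_sq_le_of_inner_sub_sub_nonpos hproj
    _ ≤ ‖a - x‖ ^ 2 - β * (2 - β) / ‖d‖ ^ 2 * r ^ 2 :=
        norm_sub_polyak_step_sub_sq_le hβ0 hr hcut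
    _ ≤ ‖a - x‖ ^ 2 - β * (2 - β) / M ^ 2 * r ^ 2 := by gcongr

theorem stmt_6_general {N : ℕ} {z d : ℕ → E} {r : ℕ → ℝ} {β M : ℝ} {x : E}
    (hβ0 : 0 ≤ β) (hβ2 : β ≤ 2) (hr : ∀ i ∈ Finset.Icc 1 N, 0 ≤ r i)
    (hd : ∀ i ∈ Finset.Icc 1 N, ‖d i‖ ≠ 0) (hdM : ∀ i ∈ Finset.Icc 1 N, ‖d i‖ ≤ M)
    (hcut : ∀ i ∈ Finset.Icc 1 N, r i + ⟪d i, x - z (i - 1)⟫ ≤ 0)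
    (hproj : ∀ i ∈ Finset.Icc 1 N,
      ⟪z (i - 1) - (β * (r i / ‖d i‖ ^ 2)) • d i - z i, x - z i⟫ ≤ 0) :
    ‖z N - x‖ ^ 2 ≤ ‖z 0 - x‖ ^ 2
      - β * (2 - β) / M ^ 2 * ∑ i ∈ Finset.Icc 1 N, r i ^ 2 := by
  rw [Finset.mul_sum]
  exact le_sub_sum_Icc_of_forall_le_sub (a := fun i => ‖z i - x‖ ^ 2) fun i hi =>
    norm_sub_sq_le_of_projected_polyak_step hβ0 hβ2 (hr i hi) (hd i hi) (hdM i hi)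
      (hcut i hi) (hproj i hi)

end ProjectedSubgradientStep

open RealInnerProductSpace in
/-- First relation of Theorem `thm_inf_updates`: after `N` random feasibility steps,
`‖z^N − x‖² ≤ ‖z^0 − x‖² − (β(2−β)/M_g²) ∑_{i=1}^N (g_i⁺(z^{i−1}))²`
for every `x ∈ Y` with `g_i(x) ≤ 0` for all `i = 1, …, N`. -/
theorem stmt_6 {E : Type*} [NormedAddCommGroup E] [InnerProductSpace ℝ E]
    (Y : Set E) (hYne : Y.Nonempty) (hYconv : Convex ℝ Y)
    (N : ℕ) (hN : 1 ≤ N)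
    (g : ℕ → E → ℝ)
    (β Mg : ℝ) (hβ0 : 0 < β) (hβ2 : β < 2) (hMg : 0 < Mg)
    (z : ℕ → E) (hzY : ∀ i ≤ N, z i ∈ Y)
    (d : ℕ → E)
    (hd : ∀ i ∈ Finset.Icc 1 N, d i ≠ 0)
    (hdnorm : ∀ i ∈ Finset.Icc 1 N, ‖d i‖ ≤ Mg)
    (hsub : ∀ i ∈ Finset.Icc 1 N, ∀ y : E,
      max (g i (z (i - 1))) 0 + ⟪d i, y - z (i - 1)⟫ ≤ max (g i y) 0)
    (hproj : ∀ i ∈ Finset.Icc 1 N, ∀ y ∈ Y,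
      ⟪z (i - 1) - (β * (max (g i (z (i - 1))) 0 / ‖d i‖ ^ 2)) • d i - z i, y - z i⟫ ≤ 0)
    (x : E) (hx : x ∈ Y) (hgx : ∀ i ∈ Finset.Icc 1 N, g i x ≤ 0) :
    ‖z N - x‖ ^ 2 ≤ ‖z 0 - x‖ ^ 2
      - β * (2 - β) / Mg ^ 2 * ∑ i ∈ Finset.Icc 1 N, (max (g i (z (i - 1))) 0) ^ 2 := by
  exact stmt_6_general hβ0.le hβ2.le (fun _ _ => le_max_right _ _)
    (fun i hi => norm_ne_zero_iff.mpr (hd i hi)) hdnorm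
    (fun i hi => (hsub i hi x).trans_eq (max_eq_right (hgx i hi))) (fun i hi => hproj i hi x hx)
end

section
/- Let E be a real inner product space, S ⊆ E a nonempty convex set, α ∈ ℝ, b ∈ E, h ∈ E, and let h' be a projection of h − α·b onto S. Then for all x ∈ S, 2α⟨b, h − x⟩ ≤ ‖h − x‖² − ‖h' − x‖² + α²‖b‖². -/
/-!
Seen from its projection `h'`, the point `h - α • b` makes an obtuse angle with every point `x`
of `S`, so projecting does not increase the distance to `x`. Expanding `‖h - α • b - x‖ ^ 2` in
`‖h' - x‖ ^ 2 ≤ ‖h - α • b - x‖ ^ 2` gives the inequality.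
-/

section ObtuseAngle

open RealInnerProductSpace

variable {E : Type*} [SeminormedAddCommGroup E] [InnerProductSpace ℝ E]

theorem norm_sub_sq_add_norm_sub_sq_le_of_inner_nonpos {w p x : E}
    (hangle : ⟪w - p, x - p⟫ ≤ 0) :
    ‖w - p‖ ^ 2 + ‖p - x‖ ^ 2 ≤ ‖w - x‖ ^ 2 := by
  have law_of_cosines := norm_sub_sq_real (w - p) (x - p)
  rw [sub_sub_sub_cancel_right, norm_sub_rev x p] at law_of_cosines
  linarith

theorem norm_sub_smul_sq_real (u v : E) (a : ℝ) :
    ‖u - a • v‖ ^ 2 = ‖u‖ ^ 2 - 2 * a * ⟪v, u⟫ + a ^ 2 * ‖v‖ ^ 2 := by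
  rw [norm_sub_sq_real, real_inner_smul_right, real_inner_comm, norm_smul, mul_pow,
    Real.norm_eq_abs, sq_abs, mul_assoc]

theorem stmt_7_general {α : ℝ} {b h h' x : E} (hangle : ⟪h - α • b - h', x - h'⟫ ≤ 0) :
    2 * α * ⟪b, h - x⟫ ≤ ‖h - x‖ ^ 2 - ‖h' - x‖ ^ 2 + α ^ 2 * ‖b‖ ^ 2 := by
  have closer : ‖h' - x‖ ^ 2 ≤ ‖h - α • b - x‖ ^ 2 :=
    (le_add_of_nonneg_left (sq_nonneg _)).trans
      (norm_sub_sq_add_norm_sub_sq_le_of_inner_nonpos hangle)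
  rw [sub_right_comm, norm_sub_smul_sq_real] at closer
  linarith

end ObtuseAngle

open RealInnerProductSpace in
/-- Lemma `lem_new_seq`: if `h'` is the projection of `h − α b` onto `S`, then for all
`x ∈ S`, `2α⟨b, h − x⟩ ≤ ‖h − x‖² − ‖h' − x‖² + α²‖b‖²`. -/
theorem stmt_7 {E : Type*} [NormedAddCommGroup E] [InnerProductSpace ℝ E]
    (S : Set E) (hSne : S.Nonempty) (hSconv : Convex ℝ S)
    (α : ℝ) (b h h' : E) (hh' : h' ∈ S)
    (hproj : ∀ y ∈ S, ⟪h - α • b - h', y - h'⟫ ≤ 0) :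
    ∀ x ∈ S, 2 * α * ⟪b, h - x⟫ ≤ ‖h - x‖ ^ 2 - ‖h' - x‖ ^ 2 + α ^ 2 * ‖b‖ ^ 2 :=
  fun x hx => stmt_7_general (hproj x hx)
end

section
/- Let E be a real inner product space, Y ⊆ E a nonempty convex set, and F : E → E with (L, M)-growth on Y. Let x_k ∈ Y, α > 0, G₁, G₂ ∈ E, let u be a projection of x_k − α·G₁ onto Y, let v be a projection of x_k − α·G₂ onto Y, and set b₁ = F(x_k) − G₁ and b₂ = F(u) − G₂. Then for all x ∈ Y and all constants w₁, w₂, w₃ > 0: ‖v − x‖² ≤ ‖x_k − x‖² + 2α⟨b₂, u − x⟩ + 2α⟨F(u), x − u⟩ + (2α²/w₁)(‖b₂‖² + ‖b₁‖²) + (2M²α²)/w₃ − (1 − 2L²α²/w₂)‖x_k − u‖² − (1 − (2w₁ + w₂ + w₃)/2)‖v − u‖². -/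
/-!
Write `z = xk`. The projection inequality of `u` tested at `v`, and that of `v` tested at `x`, are
two instances of the same three-point inequality; adding them gives the extragradient inequality
`‖v - x‖² ≤ ‖z - x‖² - ‖z - u‖² - ‖v - u‖² + 2α⟪G₂, x - u⟫ + 2α⟪G₁ - G₂, v - u⟫`.
Since `G₁ - G₂ = (F z - F u) + b₂ - b₁`, the last term splits into four products, one for each of
`b₁`, `b₂` and the two summands of `L‖z - u‖ + M`, and Young's inequality
`2rs ≤ (2/w)r² + (w/2)s²` with `w = w₁, w₁, w₂, w₃` respectively bounds them.
-/

section

open RealInnerProductSpace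

variable {E : Type*} [SeminormedAddCommGroup E] [InnerProductSpace ℝ E]

theorem norm_sub_sq_le_of_inner_sub_sub_nonpos_s8 {z g p y : E} (h : ⟪z - g - p, y - p⟫ ≤ 0) :
    ‖p - y‖ ^ 2 ≤ ‖z - y‖ ^ 2 - ‖z - p‖ ^ 2 + 2 * ⟪g, y - p⟫ := by
  have expand : ‖z - y‖ ^ 2 = ‖z - p‖ ^ 2 - 2 * ⟪z - p, y - p⟫ + ‖p - y‖ ^ 2 := by
    rw [← sub_sub_sub_cancel_right z y p, norm_sub_sq_real, norm_sub_rev y p]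
  rw [sub_right_comm, inner_sub_left] at h
  linarith

theorem extragradient_norm_sub_sq_le {z g₁ g₂ u v x : E}
    (hu : ⟪z - g₁ - u, v - u⟫ ≤ 0) (hv : ⟪z - g₂ - v, x - v⟫ ≤ 0) :
    ‖v - x‖ ^ 2 ≤ ‖z - x‖ ^ 2 - ‖z - u‖ ^ 2 - ‖v - u‖ ^ 2
      + 2 * ⟪g₂, x - u⟫ + 2 * ⟪g₁ - g₂, v - u⟫ := by
  have three_point_u := norm_sub_sq_le_of_inner_sub_sub_nonpos_s8 hu
  have three_point_v := norm_sub_sq_le_of_inner_sub_sub_nonpos_s8 hv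
  have split : ⟪g₂, x - v⟫ = ⟪g₂, x - u⟫ - ⟪g₂, v - u⟫ := by
    rw [← inner_sub_right, sub_sub_sub_cancel_right]
  rw [norm_sub_rev u v] at three_point_u
  rw [inner_sub_left]
  linarith

theorem two_mul_inner_le_mul_norm_sq_add {ε : ℝ} (hε : 0 < ε) (a d : E) :
    2 * ⟪a, d⟫ ≤ ε * ‖a‖ ^ 2 + ε⁻¹ * ‖d‖ ^ 2 := by
  have young := two_mul_le_add_mul_sq (a := ‖a‖) (b := ‖d‖) hε
  linarith [real_inner_le_norm a d]

theorem two_mul_inner_le_of_norm_le_add {ε δ s t : ℝ} (hε : 0 < ε) (hδ : 0 < δ) {a : E}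
    (ha : ‖a‖ ≤ s + t) (d : E) :
    2 * ⟪a, d⟫ ≤ ε * s ^ 2 + δ * t ^ 2 + (ε⁻¹ + δ⁻¹) * ‖d‖ ^ 2 := by
  have cauchy_schwarz : ⟪a, d⟫ ≤ (s + t) * ‖d‖ :=
    (real_inner_le_norm a d).trans (by gcongr)
  have young_s := two_mul_le_add_mul_sq (a := s) (b := ‖d‖) hε
  have young_t := two_mul_le_add_mul_sq (a := t) (b := ‖d‖) hδ
  linarith

theorem two_mul_inner_add_sub_le_of_norm_le_add {ε₁ ε₂ ε₃ s t : ℝ}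
    (hε₁ : 0 < ε₁) (hε₂ : 0 < ε₂) (hε₃ : 0 < ε₃) {a : E} (ha : ‖a‖ ≤ s + t) (b c d : E) :
    2 * ⟪a + b - c, d⟫ ≤ ε₁ * (‖b‖ ^ 2 + ‖c‖ ^ 2) + ε₂ * s ^ 2 + ε₃ * t ^ 2
      + (2 * ε₁⁻¹ + ε₂⁻¹ + ε₃⁻¹) * ‖d‖ ^ 2 := by
  have bound_a := two_mul_inner_le_of_norm_le_add hε₂ hε₃ ha d
  have bound_b := two_mul_inner_le_mul_norm_sq_add hε₁ b d
  have bound_c := two_mul_inner_le_mul_norm_sq_add hε₁ (-c) d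
  rw [inner_neg_left, norm_neg] at bound_c
  rw [inner_sub_left, inner_add_left]
  linarith

theorem stmt_8_general {F : E → E} {L M α w₁ w₂ w₃ : ℝ} {xk G₁ G₂ u v x : E}
    (hgrowth : ‖F xk - F u‖ ≤ L * ‖xk - u‖ + M)
    (hu : ⟪xk - α • G₁ - u, v - u⟫ ≤ 0) (hv : ⟪xk - α • G₂ - v, x - v⟫ ≤ 0)
    (hw₁ : 0 < w₁) (hw₂ : 0 < w₂) (hw₃ : 0 < w₃) :
    ‖v - x‖ ^ 2 ≤ ‖xk - x‖ ^ 2 + 2 * α * ⟪F u - G₂, u - x⟫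
      + 2 * α * ⟪F u, x - u⟫
      + 2 * α ^ 2 / w₁ * (‖F u - G₂‖ ^ 2 + ‖F xk - G₁‖ ^ 2)
      + 2 * M ^ 2 * α ^ 2 / w₃
      - (1 - 2 * L ^ 2 * α ^ 2 / w₂) * ‖xk - u‖ ^ 2
      - (1 - (2 * w₁ + w₂ + w₃) / 2) * ‖v - u‖ ^ 2 := by
  have descent := extragradient_norm_sub_sq_le hu hv
  have gap : α • G₁ - α • G₂ = α • (F xk - F u) + α • (F u - G₂) - α • (F xk - G₁) := by
    module
  have growth : ‖α • (F xk - F u)‖ ≤ |α| * (L * ‖xk - u‖) + |α| * M := by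
    rw [norm_smul, Real.norm_eq_abs, ← mul_add]
    gcongr
  have error := two_mul_inner_add_sub_le_of_norm_le_add
    (div_pos two_pos hw₁) (div_pos two_pos hw₂) (div_pos two_pos hw₃) growth
    (α • (F u - G₂)) (α • (F xk - G₁)) (v - u)
  have drift : ⟪α • G₂, x - u⟫ = α * ⟪F u - G₂, u - x⟫ + α * ⟪F u, x - u⟫ := by
    rw [real_inner_smul_left, ← neg_sub x u, inner_neg_right, inner_sub_left]
    ring
  rw [gap, drift] at descent
  simp only [norm_smul, Real.norm_eq_abs, mul_pow, sq_abs, inv_div] at error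
  linear_combination descent + error

end

open RealInnerProductSpace in
/-- Lemma `lem_Kor1`: one iteration of the modified stochastic Korpelevich method, with
`b₁ = F(x_k) − G₁`, `b₂ = F(u) − G₂`. -/
theorem stmt_8 {E : Type*} [NormedAddCommGroup E] [InnerProductSpace ℝ E]
    (Y : Set E) (hYne : Y.Nonempty) (hYconv : Convex ℝ Y)
    (F : E → E) (L M : ℝ) (hL : 0 < L) (hM : 0 ≤ M)
    (hgrowth : ∀ x ∈ Y, ∀ y ∈ Y, ‖F x - F y‖ ≤ L * ‖x - y‖ + M)
    (xk : E) (hxk : xk ∈ Y)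
    (α : ℝ) (hα : 0 < α)
    (G₁ G₂ : E)
    (u : E) (hu : u ∈ Y)
    (huproj : ∀ y ∈ Y, ⟪xk - α • G₁ - u, y - u⟫ ≤ 0)
    (v : E) (hv : v ∈ Y)
    (hvproj : ∀ y ∈ Y, ⟪xk - α • G₂ - v, y - v⟫ ≤ 0)
    (x : E) (hx : x ∈ Y)
    (w₁ w₂ w₃ : ℝ) (hw₁ : 0 < w₁) (hw₂ : 0 < w₂) (hw₃ : 0 < w₃) :
    ‖v - x‖ ^ 2 ≤ ‖xk - x‖ ^ 2 + 2 * α * ⟪F u - G₂, u - x⟫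
      + 2 * α * ⟪F u, x - u⟫
      + 2 * α ^ 2 / w₁ * (‖F u - G₂‖ ^ 2 + ‖F xk - G₁‖ ^ 2)
      + 2 * M ^ 2 * α ^ 2 / w₃
      - (1 - 2 * L ^ 2 * α ^ 2 / w₂) * ‖xk - u‖ ^ 2
      - (1 - (2 * w₁ + w₂ + w₃) / 2) * ‖v - u‖ ^ 2 :=
  stmt_8_general (hgrowth xk hxk u hu) (huproj v hv) (hvproj x hx) hw₁ hw₂ hw₃
end

section
/- Let E be a real inner product space, Y ⊆ E a nonempty convex set, S ⊆ Y a nonempty convex set, and F : E → E monotone on Y. Let x ∈ S, u ∈ Y, x_k ∈ Y, α > 0, ζ > 0, w₄ > 0, and let p be a projection of x_k onto S. Then 2α⟨F(u), x − u⟩ ≤ 2α⟨F(x), x − p⟩ + (1/ζ + 1/w₄)·‖F(x)‖²·α² + ζ·‖x_k − p‖² + w₄·‖u − x_k‖². -/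
/-!
Monotonicity replaces `F u` by `F x`. Splitting `x - u = (x - p) + (p - xk) + (xk - u)`, the first
summand gives the term kept in the bound, and Young's inequality with weights `ζ` and `w₄` controls
the other two.
-/

section

open scoped RealInnerProductSpace

variable {E : Type*} [SeminormedAddCommGroup E] [InnerProductSpace ℝ E]

theorem two_mul_real_inner_le_add_mul_sq (a b : E) {ε : ℝ} (hε : 0 < ε) :
    2 * ⟪a, b⟫ ≤ ε * ‖a‖ ^ 2 + ε⁻¹ * ‖b‖ ^ 2 :=
  calc
    2 * ⟪a, b⟫ ≤ 2 * (‖a‖ * ‖b‖) := by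
      gcongr
      exact real_inner_le_norm a b
    _ = 2 * ‖a‖ * ‖b‖ := (mul_assoc _ _ _).symm
    _ ≤ ε * ‖a‖ ^ 2 + ε⁻¹ * ‖b‖ ^ 2 := two_mul_le_add_mul_sq hε

theorem stmt_9_general {Y : Set E} {F : E → E}
    (hmono : ∀ x ∈ Y, ∀ y ∈ Y, 0 ≤ ⟪F x - F y, x - y⟫)
    {x u : E} (hx : x ∈ Y) (hu : u ∈ Y) (xk p : E)
    {α ζ w₄ : ℝ} (hα : 0 ≤ α) (hζ : 0 < ζ) (hw₄ : 0 < w₄) :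
    2 * α * ⟪F u, x - u⟫ ≤ 2 * α * ⟪F x, x - p⟫
      + (1 / ζ + 1 / w₄) * ‖F x‖ ^ 2 * α ^ 2
      + ζ * ‖xk - p‖ ^ 2 + w₄ * ‖u - xk‖ ^ 2 := by
  have hFuFx : ⟪F u, x - u⟫ ≤ ⟪F x, x - u⟫ := by
    simpa only [inner_sub_left, sub_nonneg] using hmono x hx u hu
  have hsplit : x - u = (x - p) + (p - xk) + (xk - u) := by abel
  have hζ_bound := two_mul_real_inner_le_add_mul_sq (p - xk) (α • F x) hζ
  have hw₄_bound := two_mul_real_inner_le_add_mul_sq (xk - u) (α • F x) hw₄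
  have hnorm_sq : ‖α • F x‖ ^ 2 = ‖F x‖ ^ 2 * α ^ 2 := by
    rw [norm_smul, mul_pow, Real.norm_eq_abs, sq_abs, mul_comm]
  calc
    2 * α * ⟪F u, x - u⟫ ≤ 2 * α * ⟪F x, x - u⟫ := by gcongr
    _ = 2 * α * ⟪F x, x - p⟫ + 2 * ⟪p - xk, α • F x⟫ + 2 * ⟪xk - u, α • F x⟫ := by
      rw [hsplit, inner_add_right, inner_add_right, real_inner_smul_right, real_inner_smul_right,
        real_inner_comm (F x) (p - xk), real_inner_comm (F x) (xk - u)]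
      ring
    _ ≤ 2 * α * ⟪F x, x - p⟫ + (ζ * ‖p - xk‖ ^ 2 + ζ⁻¹ * ‖α • F x‖ ^ 2)
        + (w₄ * ‖xk - u‖ ^ 2 + w₄⁻¹ * ‖α • F x‖ ^ 2) := by gcongr
    _ = 2 * α * ⟪F x, x - p⟫ + (1 / ζ + 1 / w₄) * ‖F x‖ ^ 2 * α ^ 2
        + ζ * ‖xk - p‖ ^ 2 + w₄ * ‖u - xk‖ ^ 2 := by
      rw [norm_sub_rev p xk, norm_sub_rev xk u, hnorm_sq]
      ring

end

open RealInnerProductSpace in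
/-- Relation (split_for_dg): for a monotone `F` and `p` the projection of `x_k` onto `S`,
`2α⟨F(u), x − u⟩ ≤ 2α⟨F(x), x − p⟩ + (1/ζ + 1/w₄)‖F(x)‖²α² + ζ‖x_k − p‖² + w₄‖u − x_k‖²`. -/
theorem stmt_9 {E : Type*} [NormedAddCommGroup E] [InnerProductSpace ℝ E]
    (Y : Set E) (hYne : Y.Nonempty) (hYconv : Convex ℝ Y)
    (S : Set E) (hSY : S ⊆ Y) (hSne : S.Nonempty) (hSconv : Convex ℝ S)
    (F : E → E)
    (hmono : ∀ x ∈ Y, ∀ y ∈ Y, 0 ≤ ⟪F x - F y, x - y⟫)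
    (x : E) (hx : x ∈ S)
    (u : E) (hu : u ∈ Y)
    (xk : E) (hxk : xk ∈ Y)
    (α ζ w₄ : ℝ) (hα : 0 < α) (hζ : 0 < ζ) (hw₄ : 0 < w₄)
    (p : E) (hp : p ∈ S) (hpproj : ∀ y ∈ S, ⟪xk - p, y - p⟫ ≤ 0) :
    2 * α * ⟪F u, x - u⟫ ≤ 2 * α * ⟪F x, x - p⟫
      + (1 / ζ + 1 / w₄) * ‖F x‖ ^ 2 * α ^ 2
      + ζ * ‖xk - p‖ ^ 2 + w₄ * ‖u - xk‖ ^ 2 := by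
  exact stmt_9_general hmono (hSY hx) hu xk p hα.le hζ hw₄
end

section
/- Let E be a real inner product space, Y ⊆ E a nonempty convex set, S ⊆ Y a nonempty convex set, and F : E → E monotone on Y. Let α > 0 and constants w₁, w₄, ζ > 0. Let x_k ∈ Y, u_k ∈ Y, G_k, G_{k+1} ∈ E; let u_{k+1} be a projection of x_k − α·G_k onto Y and v_{k+1} a projection of x_k − α·G_{k+1} onto Y; set b̄_k = F(u_k) − G_k and b̄_{k+1} = F(u_{k+1}) − G_{k+1}; let p_k be a projection of x_k onto S. Then for all x ∈ Y: 2α⟨F(x), p_k − x⟩ ≤ ‖x_k − x‖² − ‖v_{k+1} − x‖² − (1−w₁)‖v_{k+1} − u_{k+1}‖² − (1−w₄)‖x_k − u_{k+1}‖² + 2α⟨b̄_{k+1}, u_{k+1} − x⟩ + (1/ζ + 1/w₄)·‖F(x)‖²·α² + (2/w₁)(‖b̄_{k+1}‖² + ‖b̄_k‖²)·α² + 2α·‖F(u_k) − F(u_{k+1})‖·‖v_{k+1} − u_{k+1}‖ + ζ·‖x_k − p_k‖². -/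
/-!
Write `z, p` for `x_k, p_k`, `u, v` for `u_{k+1}, v_{k+1}` and `G, G'` for `G_k, G_{k+1}`.
The variational inequality characterizing `u`, tested at `v`, and the one characterizing `v`, tested
at `x`, combine so that the two squared distances `‖z - v‖ ^ 2` cancel. This leaves the inner
products `2α⟪G', x - u⟫` and `2α⟪G - G', v - u⟫`. Monotonicity bounds the first by
`2α⟪F x, x - u⟫` plus the error term `2α⟪F u - G', u - x⟫`. The splittings
`x - u = (x - p) + (p - z) + (z - u)` and
`G - G' = (F u_k - F u) + (F u - G') - (F u_k - G)` then reduce everything to the Cauchy–Schwarz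
and Young inequalities.
-/

section

open scoped RealInnerProductSpace

variable {E : Type*} [SeminormedAddCommGroup E] [InnerProductSpace ℝ E]

theorem two_mul_mul_inner_le (α : ℝ) {w : ℝ} (hw : 0 < w) (a b : E) :
    2 * α * ⟪a, b⟫ ≤ 1 / w * ‖a‖ ^ 2 * α ^ 2 + w * ‖b‖ ^ 2 := by
  calc 2 * α * ⟪a, b⟫ = 2 * ⟪b, α • a⟫ := by
        rw [real_inner_smul_right, real_inner_comm, mul_assoc]
    _ ≤ 2 * ‖b‖ * ‖α • a‖ := by
        rw [mul_assoc]
        gcongr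
        exact real_inner_le_norm b (α • a)
    _ ≤ w * ‖b‖ ^ 2 + w⁻¹ * ‖α • a‖ ^ 2 := two_mul_le_add_mul_sq hw
    _ = 1 / w * ‖a‖ ^ 2 * α ^ 2 + w * ‖b‖ ^ 2 := by
        rw [norm_smul, mul_pow, Real.norm_eq_abs, sq_abs]
        ring

theorem norm_sub_sq_le_two_mul {V : Type*} [SeminormedAddGroup V] (a b : V) :
    ‖a - b‖ ^ 2 ≤ 2 * (‖a‖ ^ 2 + ‖b‖ ^ 2) :=
  (pow_le_pow_left₀ (norm_nonneg _) (norm_sub_le a b) 2).trans add_sq_le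

theorem two_mul_mul_inner_sub_right_le (α : ℝ) {ζ w : ℝ} (hζ : 0 < ζ) (hw : 0 < w) (a p u z : E) :
    2 * α * ⟪a, p - u⟫
      ≤ (1 / ζ + 1 / w) * ‖a‖ ^ 2 * α ^ 2 + ζ * ‖z - p‖ ^ 2 + w * ‖z - u‖ ^ 2 := by
  have young_p : 2 * α * ⟪a, p - z⟫ ≤ 1 / ζ * ‖a‖ ^ 2 * α ^ 2 + ζ * ‖z - p‖ ^ 2 := by
    simpa only [norm_sub_rev] using two_mul_mul_inner_le α hζ a (p - z)
  have young_u := two_mul_mul_inner_le α hw a (z - u)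
  rw [← sub_add_sub_cancel p z u, inner_add_right]
  linarith

theorem two_mul_mul_inner_sub_right_left_le {α w : ℝ} (hα : 0 ≤ α) (hw : 0 < w)
    (a a' g g' d : E) :
    2 * α * ⟪g - g', d⟫
      ≤ 2 * α * ‖a - a'‖ * ‖d‖ + w * ‖d‖ ^ 2
        + (2 * ‖a' - g'‖ ^ 2 / w + 2 * ‖a - g‖ ^ 2 / w) * α ^ 2 := by
  have split : g - g' = (a - a') + ((a' - g') - (a - g)) := by abel
  have exact_part : 2 * α * ⟪a - a', d⟫ ≤ 2 * α * (‖a - a'‖ * ‖d‖) := by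
    gcongr
    exact real_inner_le_norm _ _
  have error_part : 2 * α * ⟪(a' - g') - (a - g), d⟫
      ≤ (2 * ‖a' - g'‖ ^ 2 / w + 2 * ‖a - g‖ ^ 2 / w) * α ^ 2 + w * ‖d‖ ^ 2 := by
    calc _ ≤ 1 / w * ‖(a' - g') - (a - g)‖ ^ 2 * α ^ 2 + w * ‖d‖ ^ 2 :=
          two_mul_mul_inner_le α hw _ d
      _ ≤ 1 / w * (2 * (‖a' - g'‖ ^ 2 + ‖a - g‖ ^ 2)) * α ^ 2 + w * ‖d‖ ^ 2 := by
          gcongr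
          exact norm_sub_sq_le_two_mul _ _
      _ = _ := by ring
  rw [split, inner_add_left]
  linarith

theorem norm_sub_sq_add_le_of_inner_sub_nonpos {z g u y : E} (h : ⟪z - g - u, y - u⟫ ≤ 0) :
    ‖u - y‖ ^ 2 + ‖z - u‖ ^ 2 ≤ ‖z - y‖ ^ 2 + 2 * ⟪g, y - u⟫ := by
  have expand : ‖z - y‖ ^ 2 = ‖z - u‖ ^ 2 - 2 * ⟪z - u, y - u⟫ + ‖u - y‖ ^ 2 := by
    rw [← sub_sub_sub_cancel_right z y u, norm_sub_sq_real, norm_sub_rev y u]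
  rw [sub_right_comm, inner_sub_left] at h
  linarith

theorem norm_sub_sq_le_of_two_projections {z g g' u v x : E}
    (hu : ⟪z - g - u, v - u⟫ ≤ 0) (hv : ⟪z - g' - v, x - v⟫ ≤ 0) :
    ‖v - x‖ ^ 2 ≤ ‖z - x‖ ^ 2 - ‖v - u‖ ^ 2 - ‖z - u‖ ^ 2
      + 2 * ⟪g', x - u⟫ + 2 * ⟪g - g', v - u⟫ := by
  have step_u := norm_sub_sq_add_le_of_inner_sub_nonpos hu
  have step_v := norm_sub_sq_add_le_of_inner_sub_nonpos hv
  have regroup : ⟪g, v - u⟫ + ⟪g', x - v⟫ = ⟪g', x - u⟫ + ⟪g - g', v - u⟫ := by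
    simp only [inner_sub_left, inner_sub_right]
    ring
  rw [norm_sub_rev u v] at step_u
  linarith

theorem inner_sub_le_of_inner_sub_nonneg {a b g u x : E} (h : 0 ≤ ⟪a - b, u - x⟫) :
    ⟪g, x - u⟫ ≤ ⟪a - g, u - x⟫ + ⟪b, x - u⟫ := by
  rw [← neg_sub u x, inner_neg_right, inner_neg_right, inner_sub_left]
  rw [inner_sub_left] at h
  linarith

theorem stmt_11_general {Y : Set E} {F : E → E}
    (hmono : ∀ x ∈ Y, ∀ y ∈ Y, 0 ≤ ⟪F x - F y, x - y⟫)
    {α w₁ w₄ ζ : ℝ} (hα : 0 ≤ α) (hw₁ : 0 < w₁) (hw₄ : 0 < w₄) (hζ : 0 < ζ)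
    (z p uk : E) {G G' u v x : E}
    (hu : u ∈ Y) (hu_proj : ∀ y ∈ Y, ⟪z - α • G - u, y - u⟫ ≤ 0)
    (hv : v ∈ Y) (hv_proj : ∀ y ∈ Y, ⟪z - α • G' - v, y - v⟫ ≤ 0) (hx : x ∈ Y) :
    2 * α * ⟪F x, p - x⟫
      ≤ ‖z - x‖ ^ 2 - ‖v - x‖ ^ 2
        - (1 - w₁) * ‖v - u‖ ^ 2
        - (1 - w₄) * ‖z - u‖ ^ 2
        + 2 * α * ⟪F u - G', u - x⟫
        + (1 / ζ + 1 / w₄) * ‖F x‖ ^ 2 * α ^ 2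
        + (2 * ‖F u - G'‖ ^ 2 / w₁ + 2 * ‖F uk - G‖ ^ 2 / w₁) * α ^ 2
        + 2 * α * ‖F uk - F u‖ * ‖v - u‖
        + ζ * ‖z - p‖ ^ 2 := by
  have descent := norm_sub_sq_le_of_two_projections (hu_proj v hv) (hv_proj x hx)
  rw [← smul_sub, real_inner_smul_left, real_inner_smul_left] at descent
  have monotone_bound : 2 * α * ⟪G', x - u⟫ ≤ 2 * α * (⟪F u - G', u - x⟫ + ⟪F x, x - u⟫) := by
    gcongr
    exact inner_sub_le_of_inner_sub_nonneg (hmono u hu x hx)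
  have split : ⟪F x, x - u⟫ = ⟪F x, p - u⟫ - ⟪F x, p - x⟫ := by
    rw [← inner_sub_right, sub_sub_sub_cancel_left]
  have distance_bound := two_mul_mul_inner_sub_right_le α hζ hw₄ (F x) p u z
  have error_bound := two_mul_mul_inner_sub_right_left_le hα hw₁ (F uk) (F u) G G' (v - u)
  rw [split] at monotone_bound
  linarith

end

open RealInnerProductSpace in
/-- Lemma `lem_Popov1`: one iteration of the modified stochastic Popov method, with
`b̄_k = F(u_k) − G_k`, `b̄_{k+1} = F(u_{k+1}) − G_{k+1}` and `p_k` the projection of `x_k`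
onto `S`. -/
theorem stmt_11 {E : Type*} [NormedAddCommGroup E] [InnerProductSpace ℝ E]
    (Y : Set E) (hYne : Y.Nonempty) (hYconv : Convex ℝ Y)
    (S : Set E) (hSY : S ⊆ Y) (hSne : S.Nonempty) (hSconv : Convex ℝ S)
    (F : E → E)
    (hmono : ∀ x ∈ Y, ∀ y ∈ Y, 0 ≤ ⟪F x - F y, x - y⟫)
    (α : ℝ) (hα : 0 < α)
    (w₁ w₄ ζ : ℝ) (hw₁ : 0 < w₁) (hw₄ : 0 < w₄) (hζ : 0 < ζ)
    (xk : E) (hxk : xk ∈ Y)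
    (uk : E) (huk : uk ∈ Y)
    (Gk Gk1 : E)
    (uk1 : E) (huk1 : uk1 ∈ Y)
    (huk1proj : ∀ y ∈ Y, ⟪xk - α • Gk - uk1, y - uk1⟫ ≤ 0)
    (vk1 : E) (hvk1 : vk1 ∈ Y)
    (hvk1proj : ∀ y ∈ Y, ⟪xk - α • Gk1 - vk1, y - vk1⟫ ≤ 0)
    (pk : E) (hpk : pk ∈ S) (hpkproj : ∀ y ∈ S, ⟪xk - pk, y - pk⟫ ≤ 0)
    (x : E) (hx : x ∈ Y) :
    2 * α * ⟪F x, pk - x⟫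
      ≤ ‖xk - x‖ ^ 2 - ‖vk1 - x‖ ^ 2
        - (1 - w₁) * ‖vk1 - uk1‖ ^ 2
        - (1 - w₄) * ‖xk - uk1‖ ^ 2
        + 2 * α * ⟪F uk1 - Gk1, uk1 - x⟫
        + (1 / ζ + 1 / w₄) * ‖F x‖ ^ 2 * α ^ 2
        + (2 * ‖F uk1 - Gk1‖ ^ 2 / w₁ + 2 * ‖F uk - Gk‖ ^ 2 / w₁) * α ^ 2
        + 2 * α * ‖F uk - F uk1‖ * ‖vk1 - uk1‖
        + ζ * ‖xk - pk‖ ^ 2 := by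
  exact stmt_11_general hmono hα.le hw₁ hw₄ hζ xk pk uk huk1 huk1proj hvk1 hvk1proj hx
end

section
/- Let 0 < q < 1 and let r ≥ 1 be a real number. Then for every natural number k ≥ 1, Σ_{t=1}^k (√(1−q))^{⌈t^{1/r}⌉} ≤ 2^r · Γ(r+1) / (ln(1/(1−q)))^r, where ⌈·⌉ denotes the ceiling function and Γ is the Gamma function. -/
/-!
Write `a = √(1 - q)`. Since `a < 1`, dropping the ceiling can only increase `a ^ ⌈t ^ (1 / r)⌉`.
The resulting terms `exp (-b * t ^ (1 / r))`, where `b = -log a = log (1 / (1 - q)) / 2`, decrease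
in `t`, so their sum is at most `∫₀^∞ exp (-b * x ^ (1 / r)) dx`, which the substitution
`u = b * x ^ (1 / r)` turns into `Γ(r + 1) / b ^ r`.
-/

open MeasureTheory Set

theorem antitoneOn_exp_neg_mul_rpow {b p : ℝ} (hb : 0 ≤ b) (hp : 0 ≤ p) :
    AntitoneOn (fun x : ℝ ↦ Real.exp (-b * x ^ p)) (Ici 0) := by
  intro x hx y _ hxy
  have hpow : x ^ p ≤ y ^ p := Real.rpow_le_rpow hx hxy hp
  exact Real.exp_le_exp.2 (mul_le_mul_of_nonpos_left hpow (neg_nonpos.2 hb))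

theorem integrableOn_exp_neg_mul_rpow {b p : ℝ} (hb : 0 < b) (hp : 0 < p) :
    IntegrableOn (fun x : ℝ ↦ Real.exp (-b * x ^ p)) (Ioi 0) := by
  simpa only [Real.rpow_zero, one_mul] using
    integrableOn_rpow_mul_exp_neg_mul_rpow neg_one_lt_zero hp hb

theorem sum_exp_neg_mul_rpow_le {b p : ℝ} (hb : 0 < b) (hp : 0 < p) (k : ℕ) :
    ∑ t ∈ Finset.Icc 1 k, Real.exp (-b * (t : ℝ) ^ p) ≤
      Real.Gamma (1 / p + 1) / b ^ (1 / p) := by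
  have hanti : AntitoneOn (fun x : ℝ ↦ Real.exp (-b * x ^ p)) (Icc 0 k) :=
    (antitoneOn_exp_neg_mul_rpow hb.le hp.le).mono Icc_subset_Ici_self
  calc ∑ t ∈ Finset.Icc 1 k, Real.exp (-b * (t : ℝ) ^ p)
      = ∑ n ∈ Finset.range k, Real.exp (-b * ((n + 1 : ℕ) : ℝ) ^ p) := by
        rw [Finset.range_eq_Ico,
          Finset.sum_Ico_add' (fun t : ℕ ↦ Real.exp (-b * (t : ℝ) ^ p)), zero_add,
          Finset.Ico_add_one_right_eq_Icc]
    _ ≤ ∫ x in Ioi (0 : ℝ), Real.exp (-b * x ^ p) :=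
        hanti.sum_range_le_integral (integrableOn_exp_neg_mul_rpow hb hp)
          fun _ _ ↦ (Real.exp_pos _).le
    _ = Real.Gamma (1 / p + 1) / b ^ (1 / p) := by
        rw [integral_exp_neg_mul_rpow hp hb, neg_div, Real.rpow_neg hb.le, inv_mul_eq_div]

theorem pow_natCeil_le_rpow {a : ℝ} (ha₀ : 0 < a) (ha₁ : a ≤ 1) (y : ℝ) :
    a ^ ⌈y⌉₊ ≤ a ^ y := by
  rw [← Real.rpow_natCast]
  exact Real.rpow_le_rpow_of_exponent_ge ha₀ ha₁ (Nat.le_ceil y)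

theorem sum_pow_natCeil_rpow_le {a p : ℝ} (ha₀ : 0 < a) (ha₁ : a < 1) (hp : 0 < p) (k : ℕ) :
    ∑ t ∈ Finset.Icc 1 k, a ^ ⌈(t : ℝ) ^ p⌉₊ ≤
      Real.Gamma (1 / p + 1) / (-Real.log a) ^ (1 / p) := by
  calc ∑ t ∈ Finset.Icc 1 k, a ^ ⌈(t : ℝ) ^ p⌉₊
      ≤ ∑ t ∈ Finset.Icc 1 k, a ^ ((t : ℝ) ^ p) :=
        Finset.sum_le_sum fun _ _ ↦ pow_natCeil_le_rpow ha₀ ha₁.le _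
    _ = ∑ t ∈ Finset.Icc 1 k, Real.exp (-(-Real.log a) * (t : ℝ) ^ p) := by
        simp only [Real.rpow_def_of_pos ha₀, neg_neg]
    _ ≤ Real.Gamma (1 / p + 1) / (-Real.log a) ^ (1 / p) :=
        sum_exp_neg_mul_rpow_le (neg_pos.2 (Real.log_neg ha₀ ha₁)) hp k

theorem stmt_13_general (q r : ℝ) (hq0 : 0 < q) (hq1 : q < 1) (hr : 0 < r) (k : ℕ) :
    ∑ t ∈ Finset.Icc 1 k, Real.sqrt (1 - q) ^ ⌈(t : ℝ) ^ (1 / r)⌉₊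
      ≤ (2 : ℝ) ^ r * Real.Gamma (r + 1) / Real.log (1 / (1 - q)) ^ r := by
  have hq : 0 < 1 - q := sub_pos.2 hq1
  have hsqrt_pos : 0 < Real.sqrt (1 - q) := Real.sqrt_pos.2 hq
  have hsqrt_lt : Real.sqrt (1 - q) < 1 := (Real.sqrt_lt' one_pos).2 (by linarith)
  have hlog_pos : 0 < Real.log (1 / (1 - q)) :=
    Real.log_pos (one_lt_one_div hq (sub_lt_self 1 hq0))
  have hlog_sqrt : -Real.log (Real.sqrt (1 - q)) = Real.log (1 / (1 - q)) / 2 := by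
    rw [Real.log_sqrt hq.le, one_div, Real.log_inv, neg_div]
  calc ∑ t ∈ Finset.Icc 1 k, Real.sqrt (1 - q) ^ ⌈(t : ℝ) ^ (1 / r)⌉₊
      ≤ Real.Gamma (r + 1) / (Real.log (1 / (1 - q)) / 2) ^ r := by
        simpa only [one_div_one_div, hlog_sqrt] using
          sum_pow_natCeil_rpow_le hsqrt_pos hsqrt_lt (one_div_pos.2 hr) k
    _ = (2 : ℝ) ^ r * Real.Gamma (r + 1) / Real.log (1 / (1 - q)) ^ r := by
        rw [Real.div_rpow hlog_pos.le zero_le_two, div_div_eq_mul_div, mul_comm]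

/-- Bound from Lemma `lem_inf_gap_bd`(ii): for `0 < q < 1`, `r ≥ 1`, and `k ≥ 1`,
`∑_{t=1}^k (√(1−q))^{⌈t^{1/r}⌉} ≤ 2^r Γ(r+1) / (ln(1/(1−q)))^r`. -/
theorem stmt_13 (q r : ℝ) (hq0 : 0 < q) (hq1 : q < 1) (hr : 1 ≤ r)
    (k : ℕ) (hk : 1 ≤ k) :
    ∑ t ∈ Finset.Icc 1 k, Real.sqrt (1 - q) ^ ⌈(t : ℝ) ^ (1 / r)⌉₊
      ≤ (2 : ℝ) ^ r * Real.Gamma (r + 1) / Real.log (1 / (1 - q)) ^ r :=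
  stmt_13_general q r hq0 hq1 (one_pos.trans_le hr) k
end

section
/- Let E be a real inner product space, Y ⊆ E a nonempty convex set, and S ⊆ Y a nonempty set. Let (Ω, μ) be a probability space, and let g : Ω → (E → ℝ) be a family of functions with g(ω)(x) ≤ 0 for all ω ∈ Ω and all x ∈ S. Let 0 < β < 2, M_g > 0, c > 0, and z ∈ Y. Suppose that for each ω ∈ Ω there is d(ω) ≠ 0, a subgradient of (g(ω))⁺ at z with ‖d(ω)‖ ≤ M_g, and a point ẑ(ω) that is a projection of z − β·((g(ω))⁺(z)/‖d(ω)‖²)·d(ω) onto Y. Assume the regularity condition dist(z, S)² ≤ c · ∫_Ω ((g(ω))⁺(z))² dμ(ω), and assume that ω ↦ dist(ẑ(ω), S)² and ω ↦ ((g(ω))⁺(z))² are integrable with respect to μ. Then ∫_Ω dist(ẑ(ω), S)² dμ(ω) ≤ (1 − β(2−β)/(c·M_g²)) · dist(z, S)². -/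
/-!
Since `g ω ≤ 0` on `S`, the subgradient inequality places `S` in the half-space
`{y | g⁺ z + ⟪d, y - z⟫ ≤ 0}`. A step towards the projection onto that half-space, relaxed by
`β ∈ (0, 2)`, lowers the squared distance to every point of `S` by at least
`β (2 - β) (g⁺ z / ‖d‖)²`, and the projection onto `Y ⊇ S` does not increase it. Integrating the
gain over `ω` turns the regularity condition into the contraction factor.
-/

section HalfSpaceStep

open RealInnerProductSpace

variable {E : Type*} [SeminormedAddCommGroup E] [InnerProductSpace ℝ E]

/-- The relaxed projection of `z` onto the half-space `{y | r + ⟪d, y - z⟫ ≤ 0}`, with relaxation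
parameter `β`; for `β = 1`, `0 ≤ r` and `‖d‖ ≠ 0` it is the metric projection. With `r = f z` and
`d` a subgradient of `f` at `z` it is the Polyak subgradient step.
Since `r / 0 = 0`, it is `z` when `‖d‖ = 0`. -/
noncomputable def halfSpaceStep (β r : ℝ) (d z : E) : E :=
  z - (β * (r / ‖d‖ ^ 2)) • d

theorem dist_halfSpaceStep_sq_add_le {β r : ℝ} {d z s : E} (hβ : 0 ≤ β) (hr : 0 ≤ r)
    (hd : ‖d‖ ≠ 0) (hs : r + ⟪d, s - z⟫ ≤ 0) :
    dist (halfSpaceStep β r d z) s ^ 2 + β * (2 - β) / ‖d‖ ^ 2 * r ^ 2 ≤ dist z s ^ 2 := by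
  set t := β * (r / ‖d‖ ^ 2) with ht
  have gain : 2 * (t * r) - t ^ 2 * ‖d‖ ^ 2 = β * (2 - β) / ‖d‖ ^ 2 * r ^ 2 := by
    rw [ht]
    field_simp
  have descent : t * ⟪d, s - z⟫ ≤ t * -r :=
    mul_le_mul_of_nonneg_left (by linarith) (by positivity)
  have expand : dist (halfSpaceStep β r d z) s ^ 2 =
      dist z s ^ 2 + 2 * (t * ⟪d, s - z⟫) + t ^ 2 * ‖d‖ ^ 2 := by
    rw [dist_comm, dist_comm z, dist_eq_norm, dist_eq_norm, halfSpaceStep, ← ht, ← sub_add,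
      norm_add_sq_real, inner_smul_right, real_inner_comm, norm_smul, mul_pow, Real.norm_eq_abs,
      sq_abs]
  linarith

theorem dist_le_dist_of_inner_nonpos {w p s : E} (h : ⟪w - p, s - p⟫ ≤ 0) :
    dist p s ≤ dist w s := by
  have expand := norm_sub_sq_real (w - p) (s - p)
  rw [sub_sub_sub_cancel_right] at expand
  rw [dist_comm p, dist_eq_norm, dist_eq_norm]
  refine le_of_sq_le_sq ?_ (norm_nonneg _)
  linarith [sq_nonneg ‖w - p‖]

theorem infDist_sq_add_le_of_forall_mem {X : Type*} [PseudoMetricSpace X] {S : Set X}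
    (hS : S.Nonempty) {x y : X} {a : ℝ} (h : ∀ s ∈ S, dist y s ^ 2 + a ≤ dist x s ^ 2) :
    Metric.infDist y S ^ 2 + a ≤ Metric.infDist x S ^ 2 := by
  have sqrt_le : √(Metric.infDist y S ^ 2 + a) ≤ Metric.infDist x S := by
    refine (Metric.le_infDist hS).2 fun s hs => Real.sqrt_le_iff.2 ⟨dist_nonneg, ?_⟩
    calc Metric.infDist y S ^ 2 + a ≤ dist y s ^ 2 + a := by
          gcongr
          · exact Metric.infDist_nonneg
          · exact Metric.infDist_le_dist_of_mem hs
      _ ≤ dist x s ^ 2 := h s hs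
  exact (Real.sqrt_le_iff.1 sqrt_le).2

theorem infDist_sq_add_le_of_inner_halfSpaceStep_nonpos {S : Set E} (hS : S.Nonempty)
    {β r M : ℝ} {d z p : E} (hβ0 : 0 ≤ β) (hβ2 : β ≤ 2) (hr : 0 ≤ r) (hd : ‖d‖ ≠ 0)
    (hdM : ‖d‖ ≤ M) (hcut : ∀ s ∈ S, r + ⟪d, s - z⟫ ≤ 0)
    (hp : ∀ s ∈ S, ⟪halfSpaceStep β r d z - p, s - p⟫ ≤ 0) :
    Metric.infDist p S ^ 2 + β * (2 - β) / M ^ 2 * r ^ 2 ≤ Metric.infDist z S ^ 2 := by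
  refine infDist_sq_add_le_of_forall_mem hS fun s hs => ?_
  have : 0 ≤ β * (2 - β) := mul_nonneg hβ0 (sub_nonneg.2 hβ2)
  calc dist p s ^ 2 + β * (2 - β) / M ^ 2 * r ^ 2
      ≤ dist (halfSpaceStep β r d z) s ^ 2 + β * (2 - β) / ‖d‖ ^ 2 * r ^ 2 := by
        gcongr
        exact dist_le_dist_of_inner_nonpos (hp s hs)
    _ ≤ dist z s ^ 2 := dist_halfSpaceStep_sq_add_le hβ0 hr hd (hcut s hs)

end HalfSpaceStep

section Expectation

open MeasureTheory RealInnerProductSpace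

variable {Ω : Type*} [MeasurableSpace Ω] {μ : Measure Ω} [IsProbabilityMeasure μ]

theorem integral_le_one_sub_div_mul_of_ae_add_le {X V : Ω → ℝ} {D κ c : ℝ}
    (hX : Integrable X μ) (hV : Integrable V μ) (hκ : 0 ≤ κ) (hc : 0 < c)
    (hXV : ∀ᵐ ω ∂μ, X ω + κ * V ω ≤ D) (hD : D ≤ c * ∫ ω, V ω ∂μ) :
    ∫ ω, X ω ∂μ ≤ (1 - κ / c) * D := by
  have mean : ∫ ω, X ω ∂μ + κ * ∫ ω, V ω ∂μ ≤ D := by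
    calc ∫ ω, X ω ∂μ + κ * ∫ ω, V ω ∂μ
        = ∫ ω, X ω + κ * V ω ∂μ := by
          rw [integral_add hX (hV.const_mul κ), integral_const_mul]
      _ ≤ ∫ _, D ∂μ := integral_mono_ae (hX.add (hV.const_mul κ)) (integrable_const D) hXV
      _ = D := by rw [integral_const, probReal_univ, one_smul]
  have gain : κ / c * D ≤ κ * ∫ ω, V ω ∂μ := by
    calc κ / c * D ≤ κ / c * (c * ∫ ω, V ω ∂μ) := by gcongr
      _ = κ * ∫ ω, V ω ∂μ := by field_simp
  linarith

theorem stmt_17_general {E : Type*} [SeminormedAddCommGroup E] [InnerProductSpace ℝ E]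
    {S : Set E} (hS : S.Nonempty) {β M c : ℝ} (hβ0 : 0 ≤ β) (hβ2 : β ≤ 2) (hc : 0 < c)
    {z : E} {r : Ω → ℝ} {d p : Ω → E} (hr : ∀ᵐ ω ∂μ, 0 ≤ r ω) (hd : ∀ᵐ ω ∂μ, ‖d ω‖ ≠ 0)
    (hdM : ∀ᵐ ω ∂μ, ‖d ω‖ ≤ M) (hcut : ∀ᵐ ω ∂μ, ∀ s ∈ S, r ω + ⟪d ω, s - z⟫ ≤ 0)
    (hp : ∀ᵐ ω ∂μ, ∀ s ∈ S, ⟪halfSpaceStep β (r ω) (d ω) z - p ω, s - p ω⟫ ≤ 0)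
    (hreg : Metric.infDist z S ^ 2 ≤ c * ∫ ω, r ω ^ 2 ∂μ)
    (hpS : Integrable (fun ω => Metric.infDist (p ω) S ^ 2) μ)
    (hr2 : Integrable (fun ω => r ω ^ 2) μ) :
    ∫ ω, Metric.infDist (p ω) S ^ 2 ∂μ ≤
      (1 - β * (2 - β) / (c * M ^ 2)) * Metric.infDist z S ^ 2 := by
  have hκ : 0 ≤ β * (2 - β) / M ^ 2 :=
    div_nonneg (mul_nonneg hβ0 (sub_nonneg.2 hβ2)) (sq_nonneg M)
  rw [mul_comm c, ← div_div]
  refine integral_le_one_sub_div_mul_of_ae_add_le hpS hr2 hκ hc ?_ hreg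
  filter_upwards [hr, hd, hdM, hcut, hp] with ω hr hd hdM hcut hp
  exact infDist_sq_add_le_of_inner_halfSpaceStep_nonpos hS hβ0 hβ2 hr hd hdM hcut hp

end Expectation

open MeasureTheory RealInnerProductSpace in
/-- Expected one-step contraction of the random feasibility update (cf. the proof of
Theorem `thm_inf_updates`): under the regularity condition,
`∫ dist(ẑ(ω), S)² dμ ≤ (1 − β(2−β)/(c M_g²)) dist(z, S)²`. -/
theorem stmt_17 {E : Type*} [NormedAddCommGroup E] [InnerProductSpace ℝ E]
    (Y : Set E) (hYne : Y.Nonempty) (hYconv : Convex ℝ Y)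
    (S : Set E) (hSY : S ⊆ Y) (hSne : S.Nonempty)
    {Ω : Type*} [MeasurableSpace Ω] (μ : Measure Ω) [IsProbabilityMeasure μ]
    (g : Ω → E → ℝ) (hg : ∀ ω : Ω, ∀ x ∈ S, g ω x ≤ 0)
    (β Mg c : ℝ) (hβ0 : 0 < β) (hβ2 : β < 2) (hMg : 0 < Mg) (hc : 0 < c)
    (z : E) (hz : z ∈ Y)
    (d : Ω → E) (hd : ∀ ω : Ω, d ω ≠ 0)
    (hsub : ∀ ω : Ω, ∀ y : E, max (g ω z) 0 + ⟪d ω, y - z⟫ ≤ max (g ω y) 0)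
    (hdnorm : ∀ ω : Ω, ‖d ω‖ ≤ Mg)
    (zhat : Ω → E) (hzhatY : ∀ ω : Ω, zhat ω ∈ Y)
    (hproj : ∀ ω : Ω, ∀ y ∈ Y,
      ⟪z - (β * (max (g ω z) 0 / ‖d ω‖ ^ 2)) • d ω - zhat ω, y - zhat ω⟫ ≤ 0)
    (hreg : Metric.infDist z S ^ 2 ≤ c * ∫ ω, (max (g ω z) 0) ^ 2 ∂μ)
    (hint1 : Integrable (fun ω => Metric.infDist (zhat ω) S ^ 2) μ)
    (hint2 : Integrable (fun ω => (max (g ω z) 0) ^ 2) μ) :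
    (∫ ω, Metric.infDist (zhat ω) S ^ 2 ∂μ)
      ≤ (1 - β * (2 - β) / (c * Mg ^ 2)) * Metric.infDist z S ^ 2 := by
  exact stmt_17_general hSne hβ0.le hβ2.le hc (.of_forall fun _ => le_max_right _ _)
    (.of_forall fun ω => norm_ne_zero_iff.2 (hd ω)) (.of_forall hdnorm)
    (.of_forall fun ω s hs => (hsub ω s).trans_eq (max_eq_right (hg ω s hs)))
    (.of_forall fun ω s hs => hproj ω s (hSY hs)) hreg hint1 hint2
end
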